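/- arXiv:1910.09529 — 2 statements merged into one kernel-verified Lean document; each statement's English description precedes it below -/
import Mathlib

section
/- Let f : ℝ^d → ℝ be differentiable, 0 < μ ≤ L, f μ-strongly convex with ∇f L-Lipschitz on a convex set C ⊆ ℝ^d containing a minimizer x* of f (f* = f(x*)) and points x^{k−1}, x^k, x^{k+1} ∈ C generated by x^k = x^{k−1} − λ_{k−1}∇f(x^{k−1}), x^{k+1} = x^k − λ_k∇f(x^k) with steps satisfying 2λ_k‖∇f(x^k) − ∇f(x^{k−1})‖ ≤ ‖x^k − x^{k−1}‖, λ_k² ≤ (1 + θ_{k−1}/2)λ_{k−1}², 1/(2L) ≤ λ_j ≤ 1/(2μ) for j ∈ {k−1, k}, and θ_{k−1} ≥ μ/L, where θ_j = λ_j/λ_{j−1}. Define Ψ^{k+1} = ‖x^{k+1} − x*‖² + (1/2)(1 + 2μ/L)‖x^{k+1} − x^k‖² + 2λ_k(1+θ_k)(f(x^k) − f*) and Ψ^k = ‖x^k − x*‖² + (1/2)(1 + 2μ/L)‖x^k − x^{k−1}‖² + 2λ_{k−1}(1+θ_{k−1})(f(x^{k−1}) − f*). Then Ψ^{k+1} ≤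 (1 − μ/(4L))·Ψ^k. -/
open scoped RealInnerProductSpace

/-!
Write `D = ‖x₁ - x₀‖`, `E = ‖x₂ - x₁‖`, `R = ‖x₁ - xstar‖`, `θ = l₁ / l₀`, `κ = μ / L` and
`s = l₁ * L`. Expanding `‖x₂ - xstar‖ ^ 2`, bounding the inner products with the gradient by strong
convexity, and splitting `D * E = (D ^ 2 + E ^ 2 - (E - D) ^ 2) / 2` gives a descent inequality with
surplus `l₁ * μ * R ^ 2 + θ * l₁ * μ * D ^ 2 + (E - D) ^ 2 / 2`. Since `l₁ * μ = κ * s ≤ 1 / 2`,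
this surplus makes the energy contract as soon as
`E ^ 2 ≤ (5 / 8 + s * θ) * D ^ 2 + (s - 1 / 4) * R ^ 2 + s * (E - D) ^ 2`.
If `θ ≤ s`, the `D ^ 2` term suffices because `E ^ 2 ≤ (θ ^ 2 + 1 / 4) * D ^ 2`. Otherwise the
`R ^ 2` term helps for small `s`, through `E ≤ s * R`, and the `(E - D) ^ 2` term for large `s`.
-/

section Scalar

variable {s θ D E R : ℝ}

lemma sq_le_of_ratio_le (hθ : 0 ≤ θ) (hθs : θ ≤ s) (hED : E ^ 2 ≤ (θ ^ 2 + 1 / 4) * D ^ 2) :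
    E ^ 2 ≤ (5 / 8 + s * θ) * D ^ 2 := by
  have hcoeff : θ ^ 2 + 1 / 4 ≤ 5 / 8 + s * θ := by nlinarith
  exact hED.trans (mul_le_mul_of_nonneg_right hcoeff (sq_nonneg D))

lemma sq_le_of_le_eight_fifths (hs : 1 / 2 ≤ s) (hs' : s ≤ 8 / 5) (hθ : 0 ≤ θ) (hθs : θ ≤ 2 * s)
    (hE : 0 ≤ E) (hED : E ^ 2 ≤ (θ ^ 2 + 1 / 4) * D ^ 2) (hER : E ≤ s * R) :
    E ^ 2 ≤ (5 / 8 + s * θ) * D ^ 2 + (s - 1 / 4) * R ^ 2 := by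
  have hE_R : (s - 1 / 4) * E ^ 2 ≤ s ^ 2 * ((s - 1 / 4) * R ^ 2) := by
    calc (s - 1 / 4) * E ^ 2 ≤ (s - 1 / 4) * (s * R) ^ 2 :=
          mul_le_mul_of_nonneg_left (pow_le_pow_left₀ hE hER 2) (by linarith)
      _ = s ^ 2 * ((s - 1 / 4) * R ^ 2) := by ring
  have hE_D : (s - 1 / 2) ^ 2 * E ^ 2 ≤ s ^ 2 * ((5 / 8 + s * θ) * D ^ 2) := by
    have hcoeff : (s - 1 / 2) ^ 2 ≤ s ^ 2 / 2 := by nlinarith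
    have hθ_sq : θ ^ 2 ≤ 2 * s * θ := by nlinarith
    calc (s - 1 / 2) ^ 2 * E ^ 2 ≤ s ^ 2 / 2 * ((θ ^ 2 + 1 / 4) * D ^ 2) := by gcongr
      _ ≤ s ^ 2 / 2 * ((2 * s * θ + 5 / 4) * D ^ 2) := by gcongr; norm_num
      _ = s ^ 2 * ((5 / 8 + s * θ) * D ^ 2) := by ring
  -- The weights `s - 1 / 4` and `(s - 1 / 2) ^ 2` of `E ^ 2` add up to `s ^ 2`.
  have hsum : s ^ 2 * E ^ 2 ≤ s ^ 2 * ((5 / 8 + s * θ) * D ^ 2 + (s - 1 / 4) * R ^ 2) := by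
    linarith
  exact le_of_mul_le_mul_left hsum (by positivity)

lemma sq_le_mul_sq_add_mul_sub_sq {a : ℝ} (ha : 1 < a) (D E : ℝ) :
    E ^ 2 ≤ a / (a - 1) * D ^ 2 + a * (E - D) ^ 2 := by
  have ha' : 0 < a - 1 := sub_pos.2 ha
  rw [← sub_nonneg]
  calc 0 ≤ ((a - 1) * E - a * D) ^ 2 / (a - 1) := by positivity
    _ = a / (a - 1) * D ^ 2 + a * (E - D) ^ 2 - E ^ 2 := by
      field_simp
      ring

lemma sq_le_of_eight_fifths_le (hs : 8 / 5 ≤ s) (hsθ : s ≤ θ) :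
    E ^ 2 ≤ (5 / 8 + s * θ) * D ^ 2 + s * (E - D) ^ 2 := by
  have hcoeff : (8 / 5 : ℝ) / (8 / 5 - 1) ≤ 5 / 8 + s * θ := by nlinarith
  calc E ^ 2 ≤ 8 / 5 / (8 / 5 - 1) * D ^ 2 + 8 / 5 * (E - D) ^ 2 :=
        sq_le_mul_sq_add_mul_sub_sq (by norm_num) D E
    _ ≤ (5 / 8 + s * θ) * D ^ 2 + s * (E - D) ^ 2 := by gcongr

lemma sq_le_of_ratio_le_two_mul (hs : 1 / 2 ≤ s) (hθ : 0 ≤ θ) (hθs : θ ≤ 2 * s)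
    (hE : 0 ≤ E) (hED : E ^ 2 ≤ (θ ^ 2 + 1 / 4) * D ^ 2) (hER : E ≤ s * R) :
    E ^ 2 ≤ (5 / 8 + s * θ) * D ^ 2 + (s - 1 / 4) * R ^ 2 + s * (E - D) ^ 2 := by
  have hR_nonneg : 0 ≤ (s - 1 / 4) * R ^ 2 := mul_nonneg (by linarith) (sq_nonneg R)
  have hdiff_nonneg : 0 ≤ s * (E - D) ^ 2 := mul_nonneg (by linarith) (sq_nonneg _)
  rcases le_total θ s with hθ_le | hθ_ge
  · linarith [sq_le_of_ratio_le hθ hθ_le hED]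
  rcases le_total s (8 / 5) with hs_le | hs_ge
  · linarith [sq_le_of_le_eight_fifths hs hs_le hθ hθs hE hED hER]
  · linarith [sq_le_of_eight_fifths_le (D := D) (E := E) hs_ge hθ_ge]

lemma mul_ratio_le_of_sq_le {κ l₀ l₁ θ₀ : ℝ} (hκ : 0 ≤ κ) (hκ' : κ ≤ 1) (hκθ : κ ≤ θ₀)
    (hl₀ : 0 < l₀) (hl : l₁ ^ 2 ≤ (1 + θ₀ / 2) * l₀ ^ 2) :
    l₁ * (l₁ / l₀) ≤ (1 - κ / 4) * (l₀ * (1 + θ₀)) := by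
  have hcoeff : 1 + θ₀ / 2 ≤ (1 - κ / 4) * (1 + θ₀) := by nlinarith
  calc l₁ * (l₁ / l₀) = l₁ ^ 2 / l₀ := by ring
    _ ≤ (1 + θ₀ / 2) * l₀ ^ 2 / l₀ := by gcongr
    _ = (1 + θ₀ / 2) * l₀ := by field_simp
    _ ≤ (1 - κ / 4) * (1 + θ₀) * l₀ := by gcongr
    _ = (1 - κ / 4) * (l₀ * (1 + θ₀)) := by ring

end Scalar

lemma smul_eq_smul_sub_sub_ratio_smul {K M : Type*} [Field K] [AddCommGroup M] [Module K M]
    {x₀ x₁ g₀ : M} {l₀ : K} (hl₀ : l₀ ≠ 0) (hx₁ : x₁ = x₀ - l₀ • g₀) (l₁ : K) (g₁ : M) :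
    l₁ • g₁ = l₁ • (g₁ - g₀) - (l₁ / l₀) • (x₁ - x₀) := by
  have hdisp : x₁ - x₀ = -(l₀ • g₀) := by rw [hx₁]; abel
  rw [hdisp, smul_neg, smul_smul, div_mul_cancel₀ l₁ hl₀, smul_sub]
  abel

section InnerProductSpace

variable {V : Type*} [NormedAddCommGroup V] [InnerProductSpace ℝ V]

lemma norm_sub_smul_sq_le {u a : V} {θ : ℝ} (hθ : 0 ≤ θ) (hu : 2 * ‖u‖ ≤ ‖a‖)
    (hua : 0 ≤ ⟪u, a⟫) : ‖u - θ • a‖ ^ 2 ≤ (θ ^ 2 + 1 / 4) * ‖a‖ ^ 2 := by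
  have hcross : 0 ≤ ⟪u, θ • a⟫ := by
    rw [real_inner_smul_right]
    positivity
  have hu_sq : (2 * ‖u‖) ^ 2 ≤ ‖a‖ ^ 2 := by gcongr
  have hθa : ‖θ • a‖ ^ 2 = θ ^ 2 * ‖a‖ ^ 2 := by
    rw [norm_smul, mul_pow, Real.norm_eq_abs, sq_abs]
  linarith [norm_sub_sq_real u (θ • a)]

lemma two_mul_norm_sub_smul_sq_le {u a : V} (θ : ℝ) (hu : 2 * ‖u‖ ≤ ‖a‖) :
    2 * ‖u - θ • a‖ ^ 2 ≤ ‖a‖ * ‖u - θ • a‖ - 2 * θ * ⟪u - θ • a, a⟫ := by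
  have hself : ‖u - θ • a‖ ^ 2 = ⟪u - θ • a, u⟫ - θ * ⟪u - θ • a, a⟫ := by
    rw [← real_inner_self_eq_norm_sq, ← real_inner_smul_right, ← inner_sub_right]
  have hcauchy : 2 * ⟪u - θ • a, u⟫ ≤ ‖a‖ * ‖u - θ • a‖ := by
    calc 2 * ⟪u - θ • a, u⟫ ≤ 2 * (‖u - θ • a‖ * ‖u‖) := by
          gcongr
          exact real_inner_le_norm _ _
      _ = 2 * ‖u‖ * ‖u - θ • a‖ := by ring
      _ ≤ ‖a‖ * ‖u - θ • a‖ := by gcongr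
  linarith

lemma hasGradientAt_eq_zero_of_isLocalMin [CompleteSpace V] {f : V → ℝ} {g x : V}
    (hmin : IsLocalMin f x) (hg : HasGradientAt f g x) : g = 0 := by
  simpa using hmin.hasFDerivAt_eq_zero hg.hasFDerivAt

/-- `f'` selects a `μ`-strong subgradient of `f` at each point of `C`. For `f' = ∇f` and convex `C`
this is `μ`-strong convexity on `C`; the inequality itself refers to neither. -/
def IsStrongSubgradientOn (μ : ℝ) (f : V → ℝ) (f' : V → V) (C : Set V) : Prop :=
  ∀ x ∈ C, ∀ y ∈ C, f x + ⟪f' x, y - x⟫ + μ / 2 * ‖y - x‖ ^ 2 ≤ f y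

/-- The energy `Ψ` of adaptive gradient descent after a step from `x` to `y` of size `l`, where
`θ` is the ratio of `l` to the preceding step size and `κ = μ / L`. -/
noncomputable def adgdEnergy (f : V → ℝ) (xstar : V) (κ l θ : ℝ) (x y : V) : ℝ :=
  ‖y - xstar‖ ^ 2 + 1 / 2 * (1 + 2 * κ) * ‖y - x‖ ^ 2 + 2 * l * (1 + θ) * (f x - f xstar)

namespace IsStrongSubgradientOn

variable {μ : ℝ} {f : V → ℝ} {f' : V → V} {C : Set V} {x y z : V}

lemma sub_add_le_inner (h : IsStrongSubgradientOn μ f f' C) (hx : x ∈ C) (hy : y ∈ C) :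
    f x - f y + μ / 2 * ‖x - y‖ ^ 2 ≤ ⟪f' x, x - y⟫ := by
  have hxy := h x hx y hy
  rw [← neg_sub x y, inner_neg_right, norm_neg] at hxy
  linarith

lemma mul_norm_sq_le_inner (h : IsStrongSubgradientOn μ f f' C) (hx : x ∈ C) (hy : y ∈ C) :
    μ * ‖x - y‖ ^ 2 ≤ ⟪f' x - f' y, x - y⟫ := by
  rw [inner_sub_left]
  linarith [h.sub_add_le_inner hx hy, h y hy x hx]

lemma le_of_eq_zero (h : IsStrongSubgradientOn μ f f' C) (hμ : 0 ≤ μ) (hx : x ∈ C) (hy : y ∈ C)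
    (hfx : f' x = 0) : f x ≤ f y := by
  have hxy := h x hx y hy
  rw [hfx, inner_zero_left, add_zero] at hxy
  exact (le_add_of_nonneg_right (by positivity)).trans hxy

lemma norm_step_sub_sq_le (h : IsStrongSubgradientOn μ f f' C) (hx : x ∈ C) (hz : z ∈ C)
    {l : ℝ} (hl : 0 ≤ l) :
    ‖x - l • f' x - z‖ ^ 2 ≤
      (1 - l * μ) * ‖x - z‖ ^ 2 - 2 * l * (f x - f z) + ‖l • f' x‖ ^ 2 := by
  have hinner := mul_le_mul_of_nonneg_left (h.sub_add_le_inner hx hz) hl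
  rw [sub_right_comm, norm_sub_sq_real, real_inner_smul_right, real_inner_comm]
  linarith

section TwoSteps

variable {x₀ x₁ x₂ : V} {l₀ l₁ : ℝ}

lemma norm_step_sq_le (h : IsStrongSubgradientOn μ f f' C) (hμ : 0 ≤ μ)
    (hx₀ : x₀ ∈ C) (hx₁ : x₁ ∈ C) (hl₀ : 0 < l₀) (hl₁ : 0 ≤ l₁) (hstep₀ : x₁ = x₀ - l₀ • f' x₀)
    (hl₁_le : 2 * l₁ * ‖f' x₁ - f' x₀‖ ≤ ‖x₁ - x₀‖) :
    ‖l₁ • f' x₁‖ ^ 2 ≤ ((l₁ / l₀) ^ 2 + 1 / 4) * ‖x₁ - x₀‖ ^ 2 := by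
  rw [smul_eq_smul_sub_sub_ratio_smul hl₀.ne' hstep₀ l₁ (f' x₁)]
  refine norm_sub_smul_sq_le (by positivity) ?_ ?_
  · rwa [norm_smul_of_nonneg hl₁, ← mul_assoc]
  · have hmono : 0 ≤ ⟪f' x₁ - f' x₀, x₁ - x₀⟫ :=
      le_trans (by positivity) (h.mul_norm_sq_le_inner hx₁ hx₀)
    rw [real_inner_smul_left]
    positivity

lemma two_mul_norm_step_sq_le (h : IsStrongSubgradientOn μ f f' C)
    (hx₀ : x₀ ∈ C) (hx₁ : x₁ ∈ C) (hl₀ : 0 < l₀) (hl₁ : 0 ≤ l₁) (hstep₀ : x₁ = x₀ - l₀ • f' x₀)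
    (hl₁_le : 2 * l₁ * ‖f' x₁ - f' x₀‖ ≤ ‖x₁ - x₀‖) :
    2 * ‖l₁ • f' x₁‖ ^ 2 ≤ ‖x₁ - x₀‖ * ‖l₁ • f' x₁‖
      - 2 * (l₁ / l₀) * l₁ * (f x₁ - f x₀ + μ / 2 * ‖x₁ - x₀‖ ^ 2) := by
  have hu : 2 * ‖l₁ • (f' x₁ - f' x₀)‖ ≤ ‖x₁ - x₀‖ := by
    rwa [norm_smul_of_nonneg hl₁, ← mul_assoc]
  have hquad := two_mul_norm_sub_smul_sq_le (l₁ / l₀) hu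
  rw [← smul_eq_smul_sub_sub_ratio_smul hl₀.ne' hstep₀ l₁ (f' x₁), real_inner_smul_left] at hquad
  have hinner := mul_le_mul_of_nonneg_left (h.sub_add_le_inner hx₁ hx₀)
    (by positivity : 0 ≤ 2 * (l₁ / l₀) * l₁)
  linarith

lemma energy_descent (h : IsStrongSubgradientOn μ f f' C)
    (hx₀ : x₀ ∈ C) (hx₁ : x₁ ∈ C) (hz : z ∈ C) (hl₀ : 0 < l₀) (hl₁ : 0 ≤ l₁)
    (hstep₀ : x₁ = x₀ - l₀ • f' x₀) (hstep₁ : x₂ = x₁ - l₁ • f' x₁)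
    (hl₁_le : 2 * l₁ * ‖f' x₁ - f' x₀‖ ≤ ‖x₁ - x₀‖) :
    ‖x₂ - z‖ ^ 2 + 1 / 2 * ‖x₂ - x₁‖ ^ 2 + 2 * l₁ * (1 + l₁ / l₀) * (f x₁ - f z)
        + 1 / 2 * (‖x₂ - x₁‖ - ‖x₁ - x₀‖) ^ 2
      ≤ (1 - l₁ * μ) * ‖x₁ - z‖ ^ 2 + (1 / 2 - l₁ / l₀ * (l₁ * μ)) * ‖x₁ - x₀‖ ^ 2
        + 2 * (l₁ * (l₁ / l₀)) * (f x₀ - f z) := by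
  have hdisp : ‖x₂ - x₁‖ = ‖l₁ • f' x₁‖ := by rw [hstep₁, sub_sub_cancel_left, norm_neg]
  have hdist := h.norm_step_sub_sq_le hx₁ hz hl₁
  have hlen := h.two_mul_norm_step_sq_le hx₀ hx₁ hl₀ hl₁ hstep₀ hl₁_le
  rw [← hstep₁] at hdist
  rw [hdisp]
  linarith

lemma ratio_mul_norm_step_sq_le (h : IsStrongSubgradientOn μ f f' C) (hμ : 0 < μ) {L : ℝ}
    (hL : 0 < L) (hx₀ : x₀ ∈ C) (hx₁ : x₁ ∈ C) (hz : ‖f' x₁‖ ≤ L * ‖x₁ - z‖)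
    (hstep₀ : x₁ = x₀ - l₀ • f' x₀) (hstep₁ : x₂ = x₁ - l₁ • f' x₁)
    (hl₁_le : 2 * l₁ * ‖f' x₁ - f' x₀‖ ≤ ‖x₁ - x₀‖)
    (hl₀ : 1 / (2 * L) ≤ l₀) (hl₁ : 1 / (2 * L) ≤ l₁) (hl₁' : l₁ ≤ 1 / (2 * μ)) :
    μ / L * ‖x₂ - x₁‖ ^ 2 ≤ (5 / 8 * (μ / L) + l₁ / l₀ * (l₁ * μ)) * ‖x₁ - x₀‖ ^ 2
      + (l₁ * μ - μ / L / 4) * ‖x₁ - z‖ ^ 2 + 1 / 2 * (‖x₂ - x₁‖ - ‖x₁ - x₀‖) ^ 2 := by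
  have hl₀_pos : 0 < l₀ := lt_of_lt_of_le (by positivity) hl₀
  have hl₁_pos : 0 < l₁ := lt_of_lt_of_le (by positivity) hl₁
  rw [div_le_iff₀ (by positivity)] at hl₀ hl₁
  rw [le_div_iff₀ (by positivity)] at hl₁'
  have hdisp : ‖x₂ - x₁‖ = ‖l₁ • f' x₁‖ := by rw [hstep₁, sub_sub_cancel_left, norm_neg]
  have hED := h.norm_step_sq_le hμ.le hx₀ hx₁ hl₀_pos hl₁_pos.le hstep₀ hl₁_le
  have hER : ‖l₁ • f' x₁‖ ≤ l₁ * L * ‖x₁ - z‖ := by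
    rw [norm_smul_of_nonneg hl₁_pos.le, mul_assoc]
    gcongr
  have hθ : l₁ / l₀ ≤ 2 * (l₁ * L) := by
    rw [div_le_iff₀ hl₀_pos]
    nlinarith
  have hκs : μ / L * (l₁ * L) = l₁ * μ := by field_simp
  rw [← hdisp] at hED hER
  calc μ / L * ‖x₂ - x₁‖ ^ 2
      ≤ μ / L * ((5 / 8 + l₁ * L * (l₁ / l₀)) * ‖x₁ - x₀‖ ^ 2
          + (l₁ * L - 1 / 4) * ‖x₁ - z‖ ^ 2 + l₁ * L * (‖x₂ - x₁‖ - ‖x₁ - x₀‖) ^ 2) := by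
        gcongr
        exact sq_le_of_ratio_le_two_mul (by linarith) (by positivity) hθ (norm_nonneg _) hED hER
    _ = (5 / 8 * (μ / L) + l₁ / l₀ * (l₁ * μ)) * ‖x₁ - x₀‖ ^ 2
          + (l₁ * μ - μ / L / 4) * ‖x₁ - z‖ ^ 2 + l₁ * μ * (‖x₂ - x₁‖ - ‖x₁ - x₀‖) ^ 2 := by
        rw [← hκs]
        ring
    _ ≤ _ := by
        gcongr
        linarith

end TwoSteps

end IsStrongSubgradientOn

theorem adgd_energy_contraction_general [CompleteSpace V] {f : V → ℝ} {f' : V → V} {C : Set V}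
    (hdiff : ∀ x ∈ C, HasGradientAt f (f' x) x) {μ L : ℝ} (hμ : 0 < μ) (hμL : μ ≤ L)
    (hsc : IsStrongSubgradientOn μ f f' C)
    (hLip : ∀ x ∈ C, ∀ y ∈ C, ‖f' x - f' y‖ ≤ L * ‖x - y‖)
    {xstar : V} (hxstar : xstar ∈ C) (hmin : IsLocalMin f xstar)
    {x₀ x₁ x₂ : V} (hx₀ : x₀ ∈ C) (hx₁ : x₁ ∈ C) {θ₀ l₀ l₁ : ℝ}
    (hstep₀ : x₁ = x₀ - l₀ • f' x₀) (hstep₁ : x₂ = x₁ - l₁ • f' x₁)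
    (hl₁_le : 2 * l₁ * ‖f' x₁ - f' x₀‖ ≤ ‖x₁ - x₀‖) (hl₁_sq : l₁ ^ 2 ≤ (1 + θ₀ / 2) * l₀ ^ 2)
    (hl₀ : 1 / (2 * L) ≤ l₀) (hl₁ : 1 / (2 * L) ≤ l₁) (hl₁' : l₁ ≤ 1 / (2 * μ))
    (hθ₀ : μ / L ≤ θ₀) :
    adgdEnergy f xstar (μ / L) l₁ (l₁ / l₀) x₁ x₂
      ≤ (1 - μ / (4 * L)) * adgdEnergy f xstar (μ / L) l₀ θ₀ x₀ x₁ := by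
  have hL : 0 < L := hμ.trans_le hμL
  have hl₀_pos : 0 < l₀ := lt_of_lt_of_le (by positivity) hl₀
  have hl₁_pos : 0 < l₁ := lt_of_lt_of_le (by positivity) hl₁
  have hκ_pos : 0 < μ / L := by positivity
  have hκ_le : μ / L ≤ 1 := (div_le_one hL).2 hμL
  have hxstar_grad : f' xstar = 0 := hasGradientAt_eq_zero_of_isLocalMin hmin (hdiff xstar hxstar)
  have hgrad : ‖f' x₁‖ ≤ L * ‖x₁ - xstar‖ := by
    simpa only [hxstar_grad, sub_zero] using hLip x₁ hx₁ xstar hxstar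
  have hdescent := hsc.energy_descent hx₀ hx₁ hxstar hl₀_pos hl₁_pos.le hstep₀ hstep₁ hl₁_le
  have hlen :=
    hsc.ratio_mul_norm_step_sq_le hμ hL hx₀ hx₁ hgrad hstep₀ hstep₁ hl₁_le hl₀ hl₁ hl₁'
  have hgap := mul_le_mul_of_nonneg_right
    (mul_ratio_le_of_sq_le hκ_pos.le hκ_le hθ₀ hl₀_pos hl₁_sq)
    (sub_nonneg.2 (hsc.le_of_eq_zero hμ.le hxstar hx₀ hxstar_grad))
  have hcoeff : 1 / 2 + 5 / 8 * (μ / L) ≤ (1 - μ / L / 4) * (1 / 2 * (1 + 2 * (μ / L))) := by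
    nlinarith
  have hdisp := mul_le_mul_of_nonneg_right hcoeff (sq_nonneg ‖x₁ - x₀‖)
  rw [mul_comm 4 L, ← div_div]
  unfold adgdEnergy
  linarith

end InnerProductSpace

/-- One-step contraction `Ψ^{k+1} ≤ (1 − μ/(4L)) Ψ^k` of the full energy in the strongly
convex analysis of adaptive gradient descent. -/
theorem adgd_energy_contraction {d : ℕ}
    (f : EuclideanSpace ℝ (Fin d) → ℝ)
    (f' : EuclideanSpace ℝ (Fin d) → EuclideanSpace ℝ (Fin d))
    (hdiff : ∀ x, HasGradientAt f (f' x) x)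
    (mu L : ℝ) (hmu : 0 < mu) (hmuL : mu ≤ L)
    (C : Set (EuclideanSpace ℝ (Fin d))) (hC : Convex ℝ C)
    (hsc : ∀ x ∈ C, ∀ y ∈ C, f x + ⟪f' x, y - x⟫ + mu / 2 * ‖y - x‖ ^ 2 ≤ f y)
    (hLip : ∀ x ∈ C, ∀ y ∈ C, ‖f' x - f' y‖ ≤ L * ‖x - y‖)
    (xstar : EuclideanSpace ℝ (Fin d)) (hxstarC : xstar ∈ C)
    (hmin : ∀ y, f xstar ≤ f y)
    (xkm1 xk xk1 : EuclideanSpace ℝ (Fin d))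
    (hxkm1C : xkm1 ∈ C) (hxkC : xk ∈ C) (hxk1C : xk1 ∈ C)
    (lkm2 lkm1 lk : ℝ) (hlkm2 : 0 < lkm2) (hlkm1 : 0 < lkm1) (hlk : 0 < lk)
    (hxk : xk = xkm1 - lkm1 • f' xkm1)
    (hxk1 : xk1 = xk - lk • f' xk)
    (hstep1 : 2 * lk * ‖f' xk - f' xkm1‖ ≤ ‖xk - xkm1‖)
    (hstep2 : lk ^ 2 ≤ (1 + (lkm1 / lkm2) / 2) * lkm1 ^ 2)
    (hlb : 1 / (2 * L) ≤ lkm1) (hub : lkm1 ≤ 1 / (2 * mu))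
    (hlb' : 1 / (2 * L) ≤ lk) (hub' : lk ≤ 1 / (2 * mu))
    (hth : mu / L ≤ lkm1 / lkm2) :
    ‖xk1 - xstar‖ ^ 2 + (1 / 2) * (1 + 2 * mu / L) * ‖xk1 - xk‖ ^ 2
        + 2 * lk * (1 + lk / lkm1) * (f xk - f xstar)
    ≤ (1 - mu / (4 * L)) *
      (‖xk - xstar‖ ^ 2 + (1 / 2) * (1 + 2 * mu / L) * ‖xk - xkm1‖ ^ 2
        + 2 * lkm1 * (1 + lkm1 / lkm2) * (f xkm1 - f xstar)) := by
  simpa only [adgdEnergy, mul_div_assoc] using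
    adgd_energy_contraction_general (fun x _ ↦ hdiff x) hmu hmuL hsc hLip hxstarC
      (.of_forall hmin) hxkm1C hxkC hxk hxk1 hstep1 hstep2 hlb hlb' hub' hth
end

section
/- Let α ∈ (0,1) and β = 1/(2(1−α)). Let f : ℝ^d → ℝ be convex and differentiable, x* a minimizer of f with f* = f(x*). Let x^{k−1}, x^k, x^{k+1} ∈ ℝ^d and λ_{k−1}, λ_k > 0 satisfy x^k = x^{k−1} − λ_{k−1}∇f(x^{k−1}), x^{k+1} = x^k − λ_k∇f(x^k), and λ_k‖∇f(x^k) − ∇f(x^{k−1})‖ ≤ α‖x^k − x^{k−1}‖. Set θ_k = λ_k/λ_{k−1}. Then ‖x^{k+1} − x*‖² + 2λ_k(1 + θ_kβ)(f(x^k) − f*) + αβ‖x^{k+1} − x^k‖² ≤ ‖x^k − x*‖² + 2λ_kθ_kβ(f(x^{k−1}) − f*) + αβ‖x^k − x^{k−1}‖². -/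
open scoped RealInnerProductSpace

/-!
Let `g` be a subgradient at the current point `x = y - s • p`. Expanding the square and applying the
subgradient inequality at `z`, a step of size `t` satisfies
`‖x - t • g - z‖² + 2 t (f x - f z) ≤ ‖x - z‖² + ‖t • g‖²`, so only the error `‖t • g‖²` has to be
absorbed. With `θ = t / s` we have `t • p = θ • (y - x)`, hence
`‖t • g‖² = ⟪t • g, t • (g - p)⟫ + t θ ⟪g, y - x⟫`. The first term is controlled by the step-size
condition and Young's inequality, the second by the subgradient inequality at `y`, which produces
the decrease of `f` between the two points. Multiplying by `2 β` closes the estimate because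
`2 β (1 - α) = 1`.
-/

section

variable {E : Type*} [NormedAddCommGroup E] [InnerProductSpace ℝ E]

theorem two_mul_inner_le_of_norm_le_mul_norm {α : ℝ} (hα : 0 ≤ α) {u r w : E}
    (hr : ‖r‖ ≤ α * ‖w‖) : 2 * ⟪u, r⟫ ≤ α * (‖u‖ ^ 2 + ‖w‖ ^ 2) :=
  calc 2 * ⟪u, r⟫ ≤ 2 * (‖u‖ * ‖r‖) := by gcongr; exact real_inner_le_norm u r
    _ ≤ 2 * (‖u‖ * (α * ‖w‖)) := by gcongr
    _ = α * (2 * ‖u‖ * ‖w‖) := by ring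
    _ ≤ α * (‖u‖ ^ 2 + ‖w‖ ^ 2) := by gcongr; exact two_mul_le_add_sq ‖u‖ ‖w‖

/-- `g` is a subgradient of `f` at `x`: the affine function with slope `g` that agrees with `f` at
`x` lies below `f` everywhere. For a differentiable convex function the gradient is a subgradient. -/
def IsSubgradientAt (f : E → ℝ) (g x : E) : Prop :=
  ∀ y, f x + ⟪g, y - x⟫ ≤ f y

namespace IsSubgradientAt

variable {f : E → ℝ} {g x : E}

theorem inner_sub_le (hg : IsSubgradientAt f g x) (y : E) : ⟪g, y - x⟫ ≤ f y - f x :=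
  le_sub_iff_add_le'.mpr (hg y)

theorem norm_sub_smul_sub_sq_add_le (hg : IsSubgradientAt f g x) {t : ℝ} (ht : 0 ≤ t) (z : E) :
    ‖x - t • g - z‖ ^ 2 + 2 * t * (f x - f z) ≤ ‖x - z‖ ^ 2 + ‖t • g‖ ^ 2 := by
  have expansion : ‖x - t • g - z‖ ^ 2 = ‖x - z‖ ^ 2 + 2 * t * ⟪g, z - x⟫ + ‖t • g‖ ^ 2 := by
    rw [sub_right_comm, norm_sub_sq_real, real_inner_smul_right, real_inner_comm, ← neg_sub z x,
      inner_neg_right]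
    ring
  have decrease : 2 * t * ⟪g, z - x⟫ ≤ 2 * t * (f z - f x) := by
    gcongr
    exact hg.inner_sub_le z
  linarith

theorem two_mul_norm_smul_sq_le (hg : IsSubgradientAt f g x) {α s t : ℝ} {y p : E}
    (hα : 0 ≤ α) (hs : 0 < s) (ht : 0 ≤ t) (hx : x = y - s • p)
    (hstep : t * ‖g - p‖ ≤ α * ‖x - y‖) :
    2 * ‖t • g‖ ^ 2 ≤ α * (‖t • g‖ ^ 2 + ‖x - y‖ ^ 2) + 2 * t * (t / s) * (f y - f x) := by
  have smul_direction : t • p = (t / s) • (y - x) := by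
    rw [hx, sub_sub_cancel, smul_smul, div_mul_cancel₀ t hs.ne']
  have decomposition :
      ‖t • g‖ ^ 2 = ⟪t • g, t • (g - p)⟫ + t * (t / s) * ⟪g, y - x⟫ := by
    rw [smul_sub, smul_direction, inner_sub_right, real_inner_self_eq_norm_sq,
      real_inner_smul_left g ((t / s) • (y - x)), real_inner_smul_right]
    ring
  have variation : 2 * ⟪t • g, t • (g - p)⟫ ≤ α * (‖t • g‖ ^ 2 + ‖x - y‖ ^ 2) :=
    two_mul_inner_le_of_norm_le_mul_norm hα (by rwa [norm_smul, Real.norm_of_nonneg ht])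
  have decrease : t * (t / s) * ⟪g, y - x⟫ ≤ t * (t / s) * (f y - f x) := by
    gcongr
    exact hg.inner_sub_le y
  linarith

end IsSubgradientAt

theorem adgd_general_energy_step_general {α β : ℝ} (hα₀ : 0 ≤ α) (hα₁ : α < 1)
    (hβ : β = 1 / (2 * (1 - α))) {f : E → ℝ} {g p x y x' : E} (hg : IsSubgradientAt f g x)
    {s t : ℝ} (hs : 0 < s) (ht : 0 ≤ t) (hx : x = y - s • p) (hx' : x' = x - t • g)
    (hstep : t * ‖g - p‖ ≤ α * ‖x - y‖) (z : E) :
    ‖x' - z‖ ^ 2 + 2 * t * (1 + (t / s) * β) * (f x - f z) + α * β * ‖x' - x‖ ^ 2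
      ≤ ‖x - z‖ ^ 2 + 2 * t * (t / s) * β * (f y - f z) + α * β * ‖x - y‖ ^ 2 := by
  have one_sub_pos : 0 < 1 - α := sub_pos.mpr hα₁
  have beta_nonneg : 0 ≤ β := by rw [hβ]; positivity
  have beta_normalization : 2 * β * (1 - α) = 1 := by rw [hβ]; field_simp
  have norm_step : ‖x' - x‖ = ‖t • g‖ := by rw [hx', sub_sub_cancel_left, norm_neg]
  have distance := hg.norm_sub_smul_sub_sq_add_le ht z
  have step_bound :=
    mul_le_mul_of_nonneg_left (hg.two_mul_norm_smul_sq_le hα₀ hs ht hx hstep) beta_nonneg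
  rw [← hx'] at distance
  rw [norm_step]
  linear_combination distance + step_bound - ‖t • g‖ ^ 2 * beta_normalization

end

/-- One-step energy inequality for the general update of adaptive gradient descent
(Algorithm 4 with parameters `α ∈ (0,1)` and `β = 1/(2(1−α))`). -/
theorem adgd_general_energy_step {d : ℕ}
    (alpha beta : ℝ) (halpha0 : 0 < alpha) (halpha1 : alpha < 1)
    (hbeta : beta = 1 / (2 * (1 - alpha)))
    (f : EuclideanSpace ℝ (Fin d) → ℝ)
    (f' : EuclideanSpace ℝ (Fin d) → EuclideanSpace ℝ (Fin d))
    (hdiff : ∀ x, HasGradientAt f (f' x) x)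
    (hconv : ∀ x y, f x + ⟪f' x, y - x⟫ ≤ f y)
    (xstar : EuclideanSpace ℝ (Fin d)) (hmin : ∀ y, f xstar ≤ f y)
    (xkm1 xk xk1 : EuclideanSpace ℝ (Fin d))
    (lkm1 lk : ℝ) (hlkm1 : 0 < lkm1) (hlk : 0 < lk)
    (hxk : xk = xkm1 - lkm1 • f' xkm1)
    (hxk1 : xk1 = xk - lk • f' xk)
    (hstep : lk * ‖f' xk - f' xkm1‖ ≤ alpha * ‖xk - xkm1‖) :
    ‖xk1 - xstar‖ ^ 2 + 2 * lk * (1 + (lk / lkm1) * beta) * (f xk - f xstar)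
        + alpha * beta * ‖xk1 - xk‖ ^ 2
    ≤ ‖xk - xstar‖ ^ 2 + 2 * lk * (lk / lkm1) * beta * (f xkm1 - f xstar)
        + alpha * beta * ‖xk - xkm1‖ ^ 2 :=
  adgd_general_energy_step_general halpha0.le halpha1 hbeta (hconv xk) hlkm1 hlk.le hxk hxk1 hstep
    xstar
end
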